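/- There is a unique x_⋆ in the interval [1/5, 1/2] satisfying (1−x_⋆)·log 2 − H_2(x_⋆) = 0, and for every integer t ≥ 2 the star poset C(1,t) satisfies c_⋆(C(1,t)) = H_2(x_⋆) (≈ 0.5357390). -/

import Mathlib

open Classical in
/-- The finset of all antichains (including the empty antichain) of a finite poset `P`. -/
noncomputable def antichains (P : Type*) [Fintype P] [PartialOrder P] : Finset (Finset P) :=
  Finset.univ.filter (fun A => IsAntichain (· ≤ ·) (A : Set P))

/-- The upper shadow `∂_Q S` of an antichain `S` of `P` inside a subset `Q ⊆ P`. -/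
def upperShadow {P : Type*} [PartialOrder P] (Q : Set P) (S : Set P) : Set P :=
  {y | y ∈ Q ∧ (∃ x ∈ S, x ≤ y) ∧ ∀ z ∈ Q, z < y → ∀ x ∈ S, ¬ x ≤ z}

open Classical in
/-- The antichains of the subposet `Q ⊆ P`, i.e. antichains of `P` contained in `Q`. -/
noncomputable def antichainsIn {P : Type*} [Fintype P] [PartialOrder P] (Q : Set P) :
    Finset (Finset P) :=
  (antichains P).filter (fun A => (A : Set P) ⊆ Q)

/-- A weighting `α ∈ Δ_{a(P)}`: a nonnegative function on the antichains of `P`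
(extended by `0` off the antichains) summing to `1`. -/
def IsWeighting {P : Type*} [Fintype P] [PartialOrder P] (α : Finset P → ℝ) : Prop :=
  (∀ A ∈ antichains P, 0 ≤ α A) ∧ (∀ A ∉ antichains P, α A = 0) ∧
    ∑ A ∈ antichains P, α A = 1

open Classical in
/-- The shadow weighting `∂_Q(α)`: the coordinate of `∂_Q(α)` at an antichain `T` of `Q`
is the sum of `α` over all antichains of `P` whose upper shadow in `Q` is `T`. -/
noncomputable def shadowWeight {P : Type*} [Fintype P] [PartialOrder P]
    (α : Finset P → ℝ) (Q : Set P) (T : Finset P) : ℝ :=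
  ∑ A ∈ (antichains P).filter (fun B : Finset P => upperShadow Q (B : Set P) = (T : Set P)), α A

/-- The critical exponent `c_{α,P}(Q) = H_{a(Q)}(∂_Q(α)) / |Q|` of a subposet `Q` of `P`
with respect to a weighting `α` (natural logarithm; `0 log 0 = 0`). -/
noncomputable def critExp {P : Type*} [Fintype P] [PartialOrder P]
    (α : Finset P → ℝ) (Q : Set P) : ℝ :=
  (∑ T ∈ antichainsIn Q, -(shadowWeight α Q T * Real.log (shadowWeight α Q T))) /
    (Q.ncard : ℝ)

/-- The critical exponent `c_⋆(P) = max_{α ∈ Δ_{a(P)}} min_{∅ ≠ Q ⊆ P} c_{α,P}(Q)`,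
expressed as `sup {c ≥ 0 : ∃ α ∈ Δ_{a(P)}, ∀ ∅ ≠ Q ⊆ P, c ≤ c_{α,P}(Q)}`. -/
noncomputable def critStar (P : Type*) [Fintype P] [PartialOrder P] : ℝ :=
  sSup {c : ℝ | 0 ≤ c ∧ ∃ α : Finset P → ℝ, IsWeighting α ∧
    ∀ Q : Set P, Q.Nonempty → c ≤ critExp α Q}

/-- The binary entropy function `H₂(x) = -x log x - (1-x) log (1-x)` (natural log). -/
noncomputable def H₂ (x : ℝ) : ℝ := -(x * Real.log x) - (1 - x) * Real.log (1 - x)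

/-- The layered poset `C(s 0, …, s (ℓ-1))`: disjoint antichains `V 0, …, V (ℓ-1)` with
`|V i| = s i`, where `x < y` precisely when `x` lies in an earlier layer than `y`. -/
def Layered (ℓ : ℕ) (s : Fin ℓ → ℕ) : Type := (i : Fin ℓ) × Fin (s i)

instance (ℓ : ℕ) (s : Fin ℓ → ℕ) : PartialOrder (Layered ℓ s) where
  le x y := x.1 < y.1 ∨ x = y
  le_refl x := Or.inr rfl
  le_trans x y z hxy hyz := by
    rcases hxy with h | h
    · rcases hyz with h' | h'
      · exact Or.inl (h.trans h')
      · subst h'; exact Or.inl h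
    · subst h; exact hyz
  le_antisymm x y hxy hyx := by
    rcases hxy with h | h
    · rcases hyx with h' | h'
      · exact absurd (h.trans h') (lt_irrefl _)
      · exact h'.symm
    · exact h

instance (ℓ : ℕ) (s : Fin ℓ → ℕ) : Fintype (Layered ℓ s) :=
  inferInstanceAs (Fintype ((i : Fin ℓ) × Fin (s i)))

/-!
Let `b` be the centre of the star. Every antichain other than `{b}` is a set of leaves. Let `p` be
the weight of `{b}`.

If `b ∈ Q`, then `{b}` is the only antichain with shadow `{b}` in `Q`, so the entropy of the shadow
weighting on `Q` is at most `H₂ p + (1 - p) (|Q| - 1) log 2`, with equality when the sets of leaves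
have equal weights. If `b ∉ Q`, the shadow of `{b}` is all of `Q`, and for equal weights concavity
bounds the entropy below by `(1 - p) |Q| log 2`. Both expressions equal `|Q| H₂ p` when
`p = x⋆`, because `H₂ x⋆ = (1 - x⋆) log 2`, which gives the lower bound `H₂ x⋆`.

Conversely, `Q = {b}` forces `c ≤ H₂ p`, which suffices when `p ≤ x⋆`. When `p ≥ x⋆`, the whole
poset suffices: `H₂ p + (1 - p) t log 2` decreases in `p` from `x⋆` on, because the slope of `H₂` at
`x⋆ ≥ 1/5` is at most `log 4 ≤ t log 2`.
-/

open Finset Real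

section Entropy

theorem negMulLog_le_sub_sub_mul_log {a q : ℝ} (ha : 0 ≤ a) (hq : 0 < q) :
    negMulLog a ≤ q - a - a * log q := by
  have h := negMulLog_le_one_sub_self (div_nonneg ha hq.le)
  have hscale : q * negMulLog (a / q) = negMulLog a + a * log q := by
    rw [div_eq_mul_inv, negMulLog_mul, negMulLog, negMulLog, log_inv]
    field_simp
  have hq' : q * (1 - a / q) = q - a := by field_simp
  linarith [mul_le_mul_of_nonneg_left h hq.le]

theorem mul_negMulLog_div {n : ℝ} (hn : n ≠ 0) (r : ℝ) :
    n * negMulLog (r / n) = negMulLog r + r * log n := by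
  rw [div_eq_mul_inv, negMulLog_mul, negMulLog, negMulLog, log_inv]
  field_simp

theorem sum_negMulLog_le {ι : Type*} (s : Finset ι) {f : ι → ℝ} (hf : ∀ i ∈ s, 0 ≤ f i) :
    ∑ i ∈ s, negMulLog (f i) ≤ negMulLog (∑ i ∈ s, f i) + (∑ i ∈ s, f i) * log #s := by
  rcases s.eq_empty_or_nonempty with rfl | hs
  · simp
  have hn : (0 : ℝ) < #s := by exact_mod_cast hs.card_pos
  have jensen := concaveOn_negMulLog.le_map_sum (w := fun _ ↦ (#s : ℝ)⁻¹)
    (fun _ _ ↦ inv_nonneg.2 hn.le) (by simp [hn.ne']) hf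
  simp only [smul_eq_mul, ← mul_sum] at jensen
  rw [inv_mul_eq_div, inv_mul_eq_div] at jensen
  rwa [div_le_iff₀' hn, mul_negMulLog_div hn.ne'] at jensen

theorem mul_negMulLog_le_negMulLog_ite_add (c : Prop) [Decidable c] {p y : ℝ} (hp₀ : 0 ≤ p)
    (hp₁ : p ≤ 1) (hy : 0 ≤ y) :
    (1 - p) * negMulLog y ≤ negMulLog ((if c then p else 0) + (1 - p) * y) := by
  have mix (e : ℝ) (he : 0 ≤ e) :=
    concaveOn_negMulLog.2 he hy hp₀ (sub_nonneg.2 hp₁) (add_sub_cancel p 1)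
  split_ifs
  · simpa using mix 1 zero_le_one
  · simpa using mix 0 le_rfl

theorem H₂_eq_negMulLog_add (x : ℝ) : H₂ x = negMulLog x + negMulLog (1 - x) := by
  simp only [H₂, negMulLog]
  ring

theorem H₂_eq_binEntropy : H₂ = binEntropy := by
  ext x
  rw [H₂_eq_negMulLog_add, binEntropy_eq_negMulLog_add_negMulLog_one_sub]

theorem strictMonoOn_H₂ : StrictMonoOn H₂ (Set.Icc 0 (1 / 2)) := by
  rw [H₂_eq_binEntropy, one_div]
  exact binEntropy_strictMonoOn

theorem H₂_le_tangent {x p : ℝ} (hx₀ : 0 < x) (hx₁ : x < 1) (hp₀ : 0 ≤ p) (hp₁ : p ≤ 1) :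
    H₂ p ≤ H₂ x + (p - x) * (log (1 - x) - log x) := by
  have h₁ := negMulLog_le_sub_sub_mul_log hp₀ hx₀
  have h₂ := negMulLog_le_sub_sub_mul_log (sub_nonneg.2 hp₁) (sub_pos.2 hx₁)
  rw [H₂_eq_negMulLog_add p, H₂]
  linarith

theorem H₂_add_mul_log_two_le {x p : ℝ} {n : ℕ} (hx₀ : 0 < x) (hx₁ : x < 1)
    (hslope : 1 - x ≤ 2 ^ n * x) (hxp : x ≤ p) (hp₁ : p ≤ 1) :
    H₂ p + (1 - p) * (n * log 2) ≤ H₂ x + (1 - x) * (n * log 2) := by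
  have hlog : log (1 - x) - log x ≤ n * log 2 := by
    have := log_le_log (sub_pos.2 hx₁) hslope
    rw [log_mul (by positivity) hx₀.ne', log_pow] at this
    linarith
  linarith [H₂_le_tangent hx₀ hx₁ (hx₀.le.trans hxp) hp₁,
    mul_le_mul_of_nonneg_left hlog (sub_nonneg.2 hxp)]

theorem strictMonoOn_H₂_sub :
    StrictMonoOn (fun x ↦ H₂ x - (1 - x) * log 2) (Set.Icc 0 (1 / 2)) := by
  intro x hx y hy hxy
  have hlog : 0 < log 2 := log_pos one_lt_two
  linarith [strictMonoOn_H₂ hx hy hxy, mul_lt_mul_of_pos_right hxy hlog]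

theorem H₂_one_fifth_le : H₂ (1 / 5) ≤ (1 - 1 / 5) * log 2 := by
  have log_five : 5 * log 5 ≤ 12 * log 2 := by
    have := log_le_log (by norm_num) (by norm_num : (5 : ℝ) ^ 5 ≤ 2 ^ 12)
    rw [log_pow, log_pow] at this
    exact_mod_cast this
  have log_one_fifth : log (1 / 5 : ℝ) = -log 5 := by rw [one_div, log_inv]
  have log_four_fifths : log (1 - 1 / 5 : ℝ) = 2 * log 2 - log 5 := by
    rw [show (1 - 1 / 5 : ℝ) = 2 ^ 2 / 5 by norm_num, log_div (by norm_num) (by norm_num), log_pow]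
    norm_num
  rw [H₂, log_one_fifth, log_four_fifths]
  linarith

theorem exists_H₂_eq_mul_log_two : ∃ x ∈ Set.Icc (1 / 5 : ℝ) (1 / 2), H₂ x = (1 - x) * log 2 := by
  have hcont : Continuous fun x ↦ H₂ x - (1 - x) * log 2 := by
    rw [H₂_eq_binEntropy]
    fun_prop
  have hright : (1 - 1 / 2) * log 2 ≤ H₂ (1 / 2) := by
    rw [H₂_eq_binEntropy, one_div, binEntropy_two_inv]
    linarith [log_pos one_lt_two]
  obtain ⟨x, hx, hroot⟩ := intermediate_value_Icc (by norm_num) hcont.continuousOn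
    ⟨sub_nonpos.2 H₂_one_fifth_le, sub_nonneg.2 hright⟩
  exact ⟨x, hx, sub_eq_zero.1 hroot⟩

end Entropy

section ShadowEntropy

variable {P : Type*} [PartialOrder P]

theorem upperShadow_subset (Q S : Set P) : upperShadow Q S ⊆ Q := fun _ hy ↦ hy.1

theorem isAntichain_upperShadow (Q S : Set P) : IsAntichain (· ≤ ·) (upperShadow Q S) := by
  rintro y ⟨hyQ, ⟨x, hxS, hxy⟩, -⟩ z ⟨-, -, hmin⟩ hne hyz
  exact hmin y hyQ (lt_of_le_of_ne hyz hne) x hxS hxy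

theorem upperShadow_singleton_of_mem {b : P} {Q : Set P} (hbQ : b ∈ Q) :
    upperShadow Q {b} = {b} := by
  ext y
  simp only [upperShadow, Set.mem_ofPred_eq, Set.mem_singleton_iff, exists_eq_left, forall_eq]
  constructor
  · rintro ⟨-, hby, hmin⟩
    by_contra hne
    exact hmin b hbQ (lt_of_le_of_ne hby (Ne.symm hne)) le_rfl
  · rintro rfl
    exact ⟨hbQ, le_rfl, fun z _ hzy ↦ hzy.not_ge⟩

variable [Fintype P] {α : Finset P → ℝ}

theorem IsWeighting.le_one (hα : IsWeighting α) {A : Finset P} (hA : A ∈ antichains P) :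
    α A ≤ 1 :=
  hα.2.2 ▸ single_le_sum hα.1 hA

/-- The entropy `H_{a(Q)}(∂_Q(α))` of the shadow weighting, the numerator of `critExp α Q`. -/
noncomputable def shadowEntropy (α : Finset P → ℝ) (Q : Set P) : ℝ :=
  ∑ T ∈ antichainsIn Q, negMulLog (shadowWeight α Q T)

theorem critExp_eq_shadowEntropy_div (α : Finset P → ℝ) (Q : Finset P) :
    critExp α (Q : Set P) = shadowEntropy α (Q : Set P) / #Q := by
  simp only [critExp, shadowEntropy, negMulLog, neg_mul, Set.ncard_coe_finset]

theorem shadowWeight_nonneg (hα : IsWeighting α) (Q : Set P) (T : Finset P) :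
    0 ≤ shadowWeight α Q T :=
  sum_nonneg fun A hA ↦ hα.1 A (mem_filter.1 hA).1

theorem sum_shadowWeight (hα : IsWeighting α) (Q : Set P) :
    ∑ T ∈ antichainsIn Q, shadowWeight α Q T = 1 := by
  classical
  have hmaps : ∀ A ∈ antichains P, (upperShadow Q (A : Set P)).toFinset ∈ antichainsIn Q := by
    intro A _
    simp [antichainsIn, antichains, isAntichain_upperShadow, upperShadow_subset]
  rw [← hα.2.2, ← sum_fiberwise_of_maps_to hmaps]
  refine sum_congr rfl fun T _ ↦ sum_congr (filter_congr fun A _ ↦ ?_) fun _ _ ↦ rfl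
  rw [← coe_inj, Set.coe_toFinset]

theorem critStar_eq_of_forall_exists_critExp_le {c : ℝ} (hc : 0 ≤ c) (hα : IsWeighting α)
    (hle : ∀ Q : Set P, Q.Nonempty → c ≤ critExp α Q)
    (hge : ∀ β : Finset P → ℝ, IsWeighting β → ∃ Q : Set P, Q.Nonempty ∧ critExp β Q ≤ c) :
    critStar P = c := by
  refine IsGreatest.csSup_eq ⟨⟨hc, α, hα, hle⟩, ?_⟩
  rintro d ⟨-, β, hβ, hd⟩
  obtain ⟨Q, hQ, hQc⟩ := hge β hβ
  exact (hd Q hQ).trans hQc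

end ShadowEntropy

theorem card_filter_powerset_inter_eq {ι : Type*} [DecidableEq ι] {S Q T : Finset ι}
    (hT : T ⊆ S ∩ Q) : #{A ∈ S.powerset | A ∩ Q = T} = 2 ^ #(S \ Q) := by
  rw [← card_powerset]
  refine card_nbij' (· \ Q) (T ∪ ·) ?_ ?_ ?_ ?_ <;> intro A hA <;> grind

theorem sum_filter_powerset_inter_eq_div {ι : Type*} [DecidableEq ι] {S Q T : Finset ι}
    (hT : T ⊆ S ∩ Q) (r : ℝ) :
    ∑ A ∈ S.powerset with A ∩ Q = T, r / 2 ^ #S = r / 2 ^ #(S ∩ Q) := by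
  rw [sum_const, card_filter_powerset_inter_eq hT, nsmul_eq_mul, ← card_sdiff_add_card_inter S Q,
    pow_add]
  push_cast
  field_simp

section StarWeighting

variable {P : Type*} [Fintype P] [DecidableEq P] {b : P} {A : Finset P} {p : ℝ}

/-- The weighting giving weight `p` to `{b}` and equal weights to the sets avoiding `b`, which is
optimal on a star with centre `b` for a suitable `p`. -/
noncomputable def starWeighting (b : P) (p : ℝ) (A : Finset P) : ℝ :=
  if A = {b} then p else if b ∈ A then 0 else (1 - p) / 2 ^ #({b}ᶜ : Finset P)

theorem starWeighting_singleton (b : P) (p : ℝ) : starWeighting b p {b} = p := if_pos rfl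

theorem starWeighting_of_notMem (hbA : b ∉ A) :
    starWeighting b p A = (1 - p) / 2 ^ #({b}ᶜ : Finset P) := by
  grind [starWeighting]

end StarWeighting

section Star

variable {P : Type*} [PartialOrder P]

/-- The point `b` is the centre of a star: it is the least element and all others (the leaves) are
maximal. A finite poset with a centre is isomorphic to `C(1,t)`, with `t` the number of leaves. -/
structure IsStarCenter (b : P) : Prop where
  isBot : IsBot b
  isMax : ∀ x, x ≠ b → IsMax x

namespace IsStarCenter

variable {b : P} {Q A T : Finset P}

theorem upperShadow_singleton_of_notMem (hb : IsStarCenter b) (hbQ : b ∉ Q) :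
    upperShadow (Q : Set P) {b} = Q := by
  refine (upperShadow_subset _ _).antisymm fun y hy ↦ ⟨hy, ⟨b, rfl, hb.isBot y⟩, ?_⟩
  intro z hz hzy
  exact absurd hzy (hb.isMax z (ne_of_mem_of_not_mem hz hbQ)).not_lt

theorem upperShadow_of_notMem [DecidableEq P] (hb : IsStarCenter b) (hbA : b ∉ A) :
    upperShadow (Q : Set P) A = (A ∩ Q : Finset P) := by
  have eq_of_le : ∀ x ∈ A, ∀ y, x ≤ y → x = y := fun x hx y hxy ↦
    (hb.isMax x (ne_of_mem_of_not_mem hx hbA)).eq_of_le hxy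
  ext y
  simp only [coe_inter, Set.mem_inter_iff, mem_coe]
  constructor
  · rintro ⟨hyQ, ⟨x, hxA, hxy⟩, -⟩
    exact ⟨eq_of_le x hxA y hxy ▸ hxA, hyQ⟩
  · rintro ⟨hyA, hyQ⟩
    refine ⟨hyQ, ⟨y, hyA, le_rfl⟩, fun z _ hzy x hxA hxz ↦ hzy.ne ?_⟩
    rw [← eq_of_le x hxA z hxz, eq_of_le x hxA y (hxz.trans hzy.le)]

variable [Fintype P] {α : Finset P → ℝ}

theorem mem_antichains_iff (hb : IsStarCenter b) : A ∈ antichains P ↔ A = {b} ∨ b ∉ A := by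
  simp only [antichains, mem_filter, mem_univ, true_and]
  constructor
  · intro hA
    by_cases hbA : b ∈ A
    · exact .inl <| eq_singleton_iff_unique_mem.2
        ⟨hbA, fun y hy ↦ (hA.eq hbA hy (hb.isBot y)).symm⟩
    · exact .inr hbA
  · rintro (rfl | hbA)
    · simp
    · exact fun x hx y _ hne hxy ↦
        hne ((hb.isMax x (ne_of_mem_of_not_mem hx hbA)).eq_of_le hxy)

theorem antichainsIn_of_notMem (hb : IsStarCenter b) (hbQ : b ∉ Q) :
    antichainsIn (Q : Set P) = Q.powerset := by
  ext A
  simp only [antichainsIn, mem_filter, hb.mem_antichains_iff, coe_subset, mem_powerset]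
  grind

theorem antichains_eq [DecidableEq P] (hb : IsStarCenter b) :
    antichains P = insert {b} ({b}ᶜ : Finset P).powerset := by
  ext A
  rw [hb.mem_antichains_iff, mem_insert, mem_powerset, subset_compl_singleton]

theorem antichainsIn_of_mem [DecidableEq P] (hb : IsStarCenter b) (hbQ : b ∈ Q) :
    antichainsIn (Q : Set P) = insert {b} (Q.erase b).powerset := by
  ext A
  simp only [antichainsIn, mem_filter, hb.mem_antichains_iff, coe_subset, mem_insert, mem_powerset,
    subset_erase]
  grind

theorem shadowWeight_eq [DecidableEq P] (hb : IsStarCenter b) (α : Finset P → ℝ)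
    (Q T : Finset P) :
    shadowWeight α (Q : Set P) T =
      (if (if b ∈ Q then {b} else Q) = T then α {b} else 0) +
        ∑ A ∈ ({b}ᶜ : Finset P).powerset with A ∩ Q = T, α A := by
  have hshadow : upperShadow (Q : Set P) {b} = (if b ∈ Q then {b} else Q : Finset P) := by
    split_ifs with hbQ
    · rw [upperShadow_singleton_of_mem (mem_coe.2 hbQ), coe_singleton]
    · exact hb.upperShadow_singleton_of_notMem hbQ
  rw [shadowWeight, hb.antichains_eq, sum_filter, sum_insert (by simp), sum_filter]
  simp only [coe_singleton, hshadow, coe_inj]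
  congr 1
  refine sum_congr rfl fun A hA ↦ ?_
  rw [mem_powerset, subset_compl_singleton] at hA
  simp only [hb.upperShadow_of_notMem hA, coe_inj]

theorem shadowWeight_singleton (hb : IsStarCenter b) (hbQ : b ∈ Q) :
    shadowWeight α (Q : Set P) {b} = α {b} := by
  classical
  rw [hb.shadowWeight_eq, if_pos hbQ, if_pos rfl, filter_false_of_mem, sum_empty, add_zero]
  intro A hA hAQ
  have : b ∈ A ∩ Q := hAQ ▸ mem_singleton_self b
  exact subset_compl_singleton.1 (mem_powerset.1 hA) (mem_inter.1 this).1

theorem shadowEntropy_of_mem [DecidableEq P] (hb : IsStarCenter b) (hbQ : b ∈ Q) :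
    shadowEntropy α (Q : Set P) =
      negMulLog (α {b}) + ∑ T ∈ (Q.erase b).powerset, negMulLog (shadowWeight α (Q : Set P) T) := by
  rw [shadowEntropy, hb.antichainsIn_of_mem hbQ, sum_insert (by simp),
    hb.shadowWeight_singleton hbQ]

theorem sum_shadowWeight_erase [DecidableEq P] (hb : IsStarCenter b) (hα : IsWeighting α)
    (hbQ : b ∈ Q) :
    ∑ T ∈ (Q.erase b).powerset, shadowWeight α (Q : Set P) T = 1 - α {b} := by
  have h := sum_shadowWeight hα (Q : Set P)
  rw [hb.antichainsIn_of_mem hbQ, sum_insert (by simp), hb.shadowWeight_singleton hbQ] at h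
  linarith

theorem shadowEntropy_le [DecidableEq P] (hb : IsStarCenter b) (hα : IsWeighting α)
    (hbQ : b ∈ Q) :
    shadowEntropy α (Q : Set P) ≤ H₂ (α {b}) + (1 - α {b}) * (#(Q.erase b) * log 2) := by
  have h := sum_negMulLog_le (Q.erase b).powerset fun T _ ↦ shadowWeight_nonneg hα (Q : Set P) T
  rw [hb.sum_shadowWeight_erase hα hbQ, card_powerset, Nat.cast_pow, log_pow, Nat.cast_ofNat] at h
  rw [hb.shadowEntropy_of_mem hbQ, H₂_eq_negMulLog_add]
  linarith

theorem exists_critExp_le (hb : IsStarCenter b) {n : ℕ} (hcard : Fintype.card P = n + 1) {x : ℝ}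
    (hx₀ : 0 < x) (hx₁ : x ≤ 1 / 2) (hx : H₂ x = (1 - x) * log 2) (hslope : 1 - x ≤ 2 ^ n * x)
    (hα : IsWeighting α) : ∃ Q : Set P, Q.Nonempty ∧ critExp α Q ≤ H₂ x := by
  classical
  have hbot : {b} ∈ antichains P := hb.mem_antichains_iff.2 (.inl rfl)
  rcases le_total (α {b}) x with hpx | hxp
  · refine ⟨({b} : Finset P), by simp, ?_⟩
    have hentropy := hb.shadowEntropy_le hα (mem_singleton_self b)
    simp only [erase_singleton, card_empty, Nat.cast_zero, zero_mul, mul_zero, add_zero] at hentropy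
    rw [critExp_eq_shadowEntropy_div, card_singleton, Nat.cast_one, div_one]
    exact hentropy.trans <| strictMonoOn_H₂.monotoneOn ⟨hα.1 _ hbot, hpx.trans hx₁⟩
      ⟨hx₀.le, hx₁⟩ hpx
  · refine ⟨(univ : Finset P), ⟨b, by simp⟩, ?_⟩
    have hentropy := hb.shadowEntropy_le hα (mem_univ b)
    rw [card_erase_of_mem (mem_univ b), card_univ, hcard, Nat.add_sub_cancel] at hentropy
    rw [critExp_eq_shadowEntropy_div, card_univ, hcard, div_le_iff₀ (by positivity),
      Nat.cast_add_one]
    calc shadowEntropy α ((univ : Finset P) : Set P)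
        ≤ H₂ (α {b}) + (1 - α {b}) * (n * log 2) := hentropy
      _ ≤ H₂ x + (1 - x) * (n * log 2) :=
          H₂_add_mul_log_two_le hx₀ (by linarith) hslope hxp (hα.le_one hbot)
      _ = H₂ x * (n + 1) := by linear_combination -(n : ℝ) * hx

variable [DecidableEq P] {p : ℝ}

theorem isWeighting_starWeighting (hb : IsStarCenter b) (hp₀ : 0 ≤ p) (hp₁ : p ≤ 1) :
    IsWeighting (starWeighting b p) := by
  have : 0 ≤ 1 - p := sub_nonneg.2 hp₁
  refine ⟨fun A _ ↦ ?_, fun A hA ↦ ?_, ?_⟩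
  · unfold starWeighting
    positivity
  · grind [hb.mem_antichains_iff, starWeighting]
  · have hleaves : ∀ A ∈ ({b}ᶜ : Finset P).powerset,
        starWeighting b p A = (1 - p) / 2 ^ #({b}ᶜ : Finset P) := fun A hA ↦
      starWeighting_of_notMem (subset_compl_singleton.1 (mem_powerset.1 hA))
    rw [hb.antichains_eq, sum_insert (by simp), starWeighting_singleton, sum_congr rfl hleaves,
      sum_const, card_powerset, nsmul_eq_mul]
    push_cast
    field_simp
    ring

theorem shadowWeight_starWeighting (hb : IsStarCenter b) (hT : T ⊆ Q.erase b) :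
    shadowWeight (starWeighting b p) (Q : Set P) T =
      (if b ∉ Q ∧ T = Q then p else 0) + (1 - p) / 2 ^ #(Q.erase b) := by
  have hinter : ({b}ᶜ : Finset P) ∩ Q = Q.erase b := by
    ext y
    simp
  have hleaves : ∀ A ∈ ({b}ᶜ : Finset P).powerset.filter (· ∩ Q = T),
      starWeighting b p A = (1 - p) / 2 ^ #({b}ᶜ : Finset P) := fun A hA ↦
    starWeighting_of_notMem (subset_compl_singleton.1 (mem_powerset.1 (mem_filter.1 hA).1))
  rw [hb.shadowWeight_eq, starWeighting_singleton, sum_congr rfl hleaves,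
    sum_filter_powerset_inter_eq_div (hinter ▸ hT), hinter]
  grind

theorem shadowEntropy_starWeighting_of_mem (hb : IsStarCenter b) (hbQ : b ∈ Q) :
    shadowEntropy (starWeighting b p) (Q : Set P) =
      H₂ p + (1 - p) * (#(Q.erase b) * log 2) := by
  have hleaves : ∀ T ∈ (Q.erase b).powerset,
      negMulLog (shadowWeight (starWeighting b p) (Q : Set P) T) =
        negMulLog ((1 - p) / 2 ^ #(Q.erase b)) := fun T hT ↦ by
    rw [hb.shadowWeight_starWeighting (mem_powerset.1 hT), if_neg (by simp [hbQ]), zero_add]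
  rw [hb.shadowEntropy_of_mem hbQ, starWeighting_singleton, sum_congr rfl hleaves, sum_const,
    card_powerset, nsmul_eq_mul, Nat.cast_pow, Nat.cast_ofNat, mul_negMulLog_div (by positivity),
    log_pow, H₂_eq_negMulLog_add, add_assoc]

theorem le_shadowEntropy_starWeighting_of_notMem (hb : IsStarCenter b) (hp₀ : 0 ≤ p) (hp₁ : p ≤ 1)
    (hbQ : b ∉ Q) :
    (1 - p) * (#Q * log 2) ≤ shadowEntropy (starWeighting b p) (Q : Set P) := by
  have hmix : ∀ T ∈ Q.powerset, (1 - p) * negMulLog (1 / 2 ^ #Q) ≤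
      negMulLog (shadowWeight (starWeighting b p) (Q : Set P) T) := by
    intro T hT
    rw [hb.shadowWeight_starWeighting (by rwa [erase_eq_of_notMem hbQ, ← mem_powerset]),
      erase_eq_of_notMem hbQ, ← mul_one_div (1 - p)]
    exact mul_negMulLog_le_negMulLog_ite_add (b ∉ Q ∧ T = Q) hp₀ hp₁ (by positivity)
  have huniform := mul_negMulLog_div (n := 2 ^ #Q) (by positivity) 1
  rw [negMulLog_one, zero_add, one_mul, log_pow] at huniform
  calc (1 - p) * (#Q * log 2)
      = ∑ T ∈ Q.powerset, (1 - p) * negMulLog (1 / 2 ^ #Q) := by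
        rw [sum_const, card_powerset, nsmul_eq_mul, Nat.cast_pow, Nat.cast_ofNat, ← huniform,
          mul_left_comm]
    _ ≤ shadowEntropy (starWeighting b p) (Q : Set P) := by
        rw [shadowEntropy, hb.antichainsIn_of_notMem hbQ]
        exact sum_le_sum hmix

theorem le_critExp_starWeighting (hb : IsStarCenter b) (hp₀ : 0 ≤ p) (hp₁ : p ≤ 1)
    (hp : H₂ p = (1 - p) * log 2) {Q : Set P} (hQ : Q.Nonempty) :
    H₂ p ≤ critExp (starWeighting b p) Q := by
  lift Q to Finset P using Q.toFinite
  have hcard : (0 : ℝ) < #Q := by exact_mod_cast (coe_nonempty.1 hQ).card_pos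
  rw [critExp_eq_shadowEntropy_div, le_div_iff₀ hcard]
  by_cases hbQ : b ∈ Q
  · rw [hb.shadowEntropy_starWeighting_of_mem hbQ, ← card_erase_add_one hbQ]
    push_cast
    exact le_of_eq (by linear_combination (#(Q.erase b) : ℝ) * hp)
  · refine le_of_eq_of_le ?_ (hb.le_shadowEntropy_starWeighting_of_notMem hp₀ hp₁ hbQ)
    linear_combination (#Q : ℝ) * hp

end IsStarCenter

theorem IsStarCenter.critStar_eq [Fintype P] {b : P} (hb : IsStarCenter b) {n : ℕ}
    (hcard : Fintype.card P = n + 1) {x : ℝ} (hx₀ : 0 < x) (hx₁ : x ≤ 1 / 2)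
    (hx : H₂ x = (1 - x) * log 2) (hslope : 1 - x ≤ 2 ^ n * x) : critStar P = H₂ x := by
  classical
  have hx₁' : 0 ≤ 1 - x := by linarith
  refine critStar_eq_of_forall_exists_critExp_le ?_
    (hb.isWeighting_starWeighting hx₀.le (sub_nonneg.1 hx₁'))
    (fun Q hQ ↦ hb.le_critExp_starWeighting hx₀.le (sub_nonneg.1 hx₁') hx hQ)
    (fun β hβ ↦ hb.exists_critExp_le hcard hx₀ hx₁ hx hslope hβ)
  rw [hx]
  positivity

end Star

namespace Layered

theorem card (ℓ : ℕ) (s : Fin ℓ → ℕ) : Fintype.card (Layered ℓ s) = ∑ i, s i :=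
  (Fintype.card_sigma (α := fun i ↦ Fin (s i))).trans <| by simp only [Fintype.card_fin]

theorem exists_isStarCenter (t : ℕ) : ∃ b : Layered 2 ![1, t], IsStarCenter b := by
  let b : Layered 2 ![1, t] := ⟨0, (0 : Fin 1)⟩
  have eq_of_fst : ∀ y : Layered 2 ![1, t], y.1 = 0 → y = b := by
    rintro ⟨_, j⟩ rfl
    exact congrArg (Sigma.mk 0) (Subsingleton.elim (α := Fin 1) j 0)
  refine ⟨b, fun y ↦ ?_, fun x hx y hxy ↦ ?_⟩
  · by_cases hy : y.1 = 0
    · exact (eq_of_fst y hy).ge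
    · exact .inl (Fin.pos_iff_ne_zero.2 hy)
  · rcases hxy with hlt | rfl
    · exact absurd (eq_of_fst x (by omega)) hx
    · exact le_rfl

end Layered

/-- There is a unique `x⋆ ∈ [1/5, 1/2]` with `(1 - x⋆) log 2 - H₂(x⋆) = 0`, and for every
`t ≥ 2` the star poset `C(1,t)` satisfies `c_⋆(C(1,t)) = H₂(x⋆)`. -/
theorem stmt14 :
    ∃ xs : ℝ, xs ∈ Set.Icc (1 / 5 : ℝ) (1 / 2) ∧
      (1 - xs) * Real.log 2 - H₂ xs = 0 ∧
      (∀ y ∈ Set.Icc (1 / 5 : ℝ) (1 / 2), (1 - y) * Real.log 2 - H₂ y = 0 → y = xs) ∧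
      ∀ t : ℕ, 2 ≤ t → critStar (Layered 2 ![1, t]) = H₂ xs := by
  obtain ⟨x, hx, hroot⟩ := exists_H₂_eq_mul_log_two
  have hx₀ : 0 < x := by linarith [hx.1]
  refine ⟨x, hx, sub_eq_zero.2 hroot.symm, fun y hy hyroot ↦ ?_, fun t ht ↦ ?_⟩
  · refine strictMonoOn_H₂_sub.injOn ⟨by linarith [hy.1], hy.2⟩ ⟨hx₀.le, hx.2⟩ ?_
    linarith
  · obtain ⟨b, hb⟩ := Layered.exists_isStarCenter t
    have hcard : Fintype.card (Layered 2 ![1, t]) = t + 1 := by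
      simp [Layered.card, add_comm]
    have hslope : 1 - x ≤ 2 ^ t * x := calc
      1 - x ≤ 2 ^ 2 * x := by linarith [hx.1]
      _ ≤ 2 ^ t * x := by gcongr; norm_num
    exact hb.critStar_eq hcard hx₀ hx.2 hroot hslope
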